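/- arXiv:1101.1800 — 2 statements merged into one kernel-verified Lean document; each statement's English description precedes it below -/
import Mathlib

section
/- Every nonempty subset W of 𝓡 that is bounded above with respect to ⪯ has a least upper bound in (𝓡,⪯), and every nonempty subset of 𝓡 that is bounded below with respect to ⪯ has a greatest lower bound in (𝓡,⪯). -/
/-!
A decimal representation `x` is encoded by the integers `10 ^ k * [x]_k`, on which the order `⪯` is
pointwise. The sequences arising in this way are exactly those satisfying `⌊S (k + 1) / 10⌋ = S k`.
Bounded nonempty sets of integers have greatest and least elements, and monotone maps, such as
`z ↦ ⌊z / 10⌋`, preserve these; hence the levelwise maxima (minima) of a bounded set again come from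
a decimal representation, which is its supremum (infimum).
-/

/-- The ambient space `𝓡` of decimal representations: an integer part together
with a sequence of digits in `{0,…,9}`. -/
abbrev DecimalRep := ℤ × (ℕ → Fin 10)

namespace DecimalRep

open scoped Classical

/-- The truncation `[x]_k = x₀ + ∑_{i=1}^k x_i / 10^i` of `x` up to the `k`-th
digit, as a rational number. -/
def trunc (x : DecimalRep) (k : ℕ) : ℚ :=
  (x.1 : ℚ) + ∑ i ∈ Finset.range k, ((x.2 i : ℕ) : ℚ) / 10 ^ (i + 1)

/-- The order `⪯` on `𝓡`: `x ⪯ y` iff every truncation of `x` is at most the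
corresponding truncation of `y`. -/
def le (x y : DecimalRep) : Prop := ∀ k : ℕ, trunc x k ≤ trunc y k

/-- The strict order `≺` on `𝓡`. -/
def lt (x y : DecimalRep) : Prop := le x y ∧ x ≠ y

/-- Two decimal representations are equivalent ("have no gap") iff there is no
third element lying between them. -/
def equiv (x y : DecimalRep) : Prop :=
  ¬ ∃ z : DecimalRep, z ≠ x ∧ z ≠ y ∧
      ((le x z ∧ le z y) ∨ (le y z ∧ le z x))

/-- `𝓡₉`: decimal representations ending in an infinite string of nines. -/
def allNines (x : DecimalRep) : Prop := ∃ N : ℕ, ∀ k ≥ N, x.2 k = 9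

/-- `ℚ_F`: decimal representations ending in an infinite string of zeros. -/
def finiteDec (x : DecimalRep) : Prop := ∃ N : ℕ, ∀ k ≥ N, x.2 k = 0

/-- The decimal expansion map `ι : ℚ → 𝓡`, satisfying
`[ι(α)]_k = ⌊10^k·α⌋/10^k` for all `k`. -/
def iota (α : ℚ) : DecimalRep :=
  (⌊α⌋, fun k => ⟨(⌊α * 10 ^ (k + 1)⌋ % 10).toNat, by
    have h1 : (0 : ℤ) ≤ ⌊α * 10 ^ (k + 1)⌋ % 10 := Int.emod_nonneg _ (by norm_num)
    have h2 : ⌊α * 10 ^ (k + 1)⌋ % 10 < 10 := Int.emod_lt_of_pos _ (by norm_num)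
    omega⟩)

/-- `M` is a least upper bound of `W` in `(𝓡,⪯)`. -/
def IsLub (W : Set DecimalRep) (M : DecimalRep) : Prop :=
  (∀ w ∈ W, le w M) ∧ ∀ M' : DecimalRep, (∀ w ∈ W, le w M') → le M M'

/-- `M` is a greatest lower bound of `W` in `(𝓡,⪯)`. -/
def IsGlb (W : Set DecimalRep) (M : DecimalRep) : Prop :=
  (∀ w ∈ W, le M w) ∧ ∀ M' : DecimalRep, (∀ w ∈ W, le M' w) → le M' M

/-- The least upper bound of a set in `(𝓡,⪯)` (junk value if none exists). -/
noncomputable def sup (W : Set DecimalRep) : DecimalRep :=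
  if h : ∃ M, IsLub W M then h.choose else default

/-- The greatest lower bound of a set in `(𝓡,⪯)` (junk value if none exists). -/
noncomputable def inf (W : Set DecimalRep) : DecimalRep :=
  if h : ∃ M, IsGlb W M then h.choose else default

/-- Addition `x ⊕ y := sup {ι([x]_k + [y]_k) : k ∈ ℕ}` on `𝓡`. -/
noncomputable def add (x y : DecimalRep) : DecimalRep :=
  sup { z | ∃ k : ℕ, z = iota (trunc x k + trunc y k) }

/-- The "additive inverse" map `Ψ(x₀.x₁x₂⋯) = (−1−x₀).(9−x₁)(9−x₂)⋯`. -/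
def psi (x : DecimalRep) : DecimalRep :=
  (-1 - x.1, fun k => ⟨9 - (x.2 k).val, by have := (x.2 k).isLt; omega⟩)

/-- The signal map: `0` on the nonnegative part, `1` on the negative part. -/
noncomputable def sign (x : DecimalRep) : ℕ :=
  if le (iota 0) x then 0 else 1

/-- The absolute value `‖x‖ := max {x, Ψ(x)}` with respect to `⪯`. -/
noncomputable def norm (x : DecimalRep) : DecimalRep :=
  if le x (psi x) then psi x else x

/-- Multiplication
`x ⊗ y := Ψ^(sign x + sign y) (sup {ι([‖x‖]_k · [‖y‖]_k) : k ∈ ℕ})` on `𝓡`. -/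
noncomputable def mul (x y : DecimalRep) : DecimalRep :=
  psi^[sign x + sign y]
    (sup { z | ∃ k : ℕ, z = iota (trunc (norm x) k * trunc (norm y) k) })

/-- The multiplicative inverse
`x⁻¹ := Ψ^(sign x) (inf {ι(1/[‖x‖]_k) : k ∈ ℕ, [‖x‖]_k > 0})`. -/
noncomputable def inv (x : DecimalRep) : DecimalRep :=
  psi^[sign x]
    (inf { z | ∃ k : ℕ, 0 < trunc (norm x) k ∧ z = iota (1 / trunc (norm x) k) })

/-- A sequence of rationals is Cauchy. -/
def IsCauchy (x : ℕ → ℚ) : Prop :=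
  ∀ ε : ℚ, 0 < ε → ∃ N : ℕ, ∀ m n : ℕ, N ≤ m → N ≤ n → |x m - x n| < ε

/-- The upper limit `inf { sup {f k : k ≥ n} : n ∈ ℕ }` of a sequence in `𝓡`. -/
noncomputable def upperLimit (f : ℕ → DecimalRep) : DecimalRep :=
  inf { z | ∃ n : ℕ, z = sup { w | ∃ k : ℕ, n ≤ k ∧ w = f k } }

/-- The lower limit `sup { inf {f k : k ≥ n} : n ∈ ℕ }` of a sequence in `𝓡`. -/
noncomputable def lowerLimit (f : ℕ → DecimalRep) : DecimalRep :=
  sup { z | ∃ n : ℕ, z = inf { w | ∃ k : ℕ, n ≤ k ∧ w = f k } }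

end DecimalRep

namespace DecimalRep

/-- The integer `10 ^ k * [x]_k`, which allows truncations to be compared and extremized in `ℤ`.
The argument `k` comes first so that `scaledTrunc k '' W` is the set of level-`k` truncations. -/
def scaledTrunc : ℕ → DecimalRep → ℤ
  | 0, x => x.1
  | k + 1, x => 10 * scaledTrunc k x + (x.2 k : ℕ)

lemma trunc_eq_scaledTrunc_div (x : DecimalRep) (k : ℕ) :
    trunc x k = (scaledTrunc k x : ℚ) / 10 ^ k := by
  induction k with
  | zero => simp [trunc, scaledTrunc]
  | succ k ih =>
    calc trunc x (k + 1) = trunc x k + ((x.2 k : ℕ) : ℚ) / 10 ^ (k + 1) := by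
          rw [trunc, trunc, Finset.sum_range_succ, add_assoc]
      _ = (scaledTrunc (k + 1) x : ℚ) / 10 ^ (k + 1) := by
          rw [ih, scaledTrunc]
          push_cast
          field_simp
          ring

lemma le_iff_scaledTrunc_le {x y : DecimalRep} :
    le x y ↔ ∀ k, scaledTrunc k x ≤ scaledTrunc k y := by
  refine forall_congr' fun k => ?_
  rw [trunc_eq_scaledTrunc_div, trunc_eq_scaledTrunc_div,
    div_le_div_iff_of_pos_right (by positivity), Int.cast_le]

lemma scaledTrunc_succ_ediv_ten (k : ℕ) (x : DecimalRep) :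
    scaledTrunc (k + 1) x / 10 = scaledTrunc k x := by
  have hdigit : (x.2 k : ℕ) < 10 := (x.2 k).isLt
  rw [scaledTrunc]
  omega

lemma exists_scaledTrunc_eq {S : ℕ → ℤ} (hS : ∀ k, S (k + 1) / 10 = S k) :
    ∃ x, ∀ k, scaledTrunc k x = S k := by
  refine ⟨(S 0, fun k => ⟨(S (k + 1) % 10).toNat, by omega⟩), fun k => ?_⟩
  induction k with
  | zero => rfl
  | succ k ih =>
    have hk := hS k
    rw [scaledTrunc, ih]
    dsimp only
    omega

lemma image_ediv_ten_image_scaledTrunc_succ (W : Set DecimalRep) (k : ℕ) :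
    (· / 10) '' (scaledTrunc (k + 1) '' W) = scaledTrunc k '' W := by
  simp only [Set.image_image, scaledTrunc_succ_ediv_ten]

lemma monotone_ediv_ten : Monotone (· / 10 : ℤ → ℤ) :=
  fun _ _ h => Int.ediv_le_ediv (by norm_num) h

variable {W : Set DecimalRep}

lemma exists_isGreatest_image_scaledTrunc (hW : W.Nonempty)
    (hbdd : ∀ k, BddAbove (scaledTrunc k '' W)) :
    ∃ L, ∀ k, IsGreatest (scaledTrunc k '' W) (scaledTrunc k L) := by
  choose S hS using fun k => (hbdd k).exists_isGreatest_of_nonempty (hW.image _)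
  have hcompat (k : ℕ) : S (k + 1) / 10 = S k := by
    have hmax := monotone_ediv_ten.map_isGreatest (hS (k + 1))
    rw [image_ediv_ten_image_scaledTrunc_succ] at hmax
    exact hmax.unique (hS k)
  obtain ⟨L, hL⟩ := exists_scaledTrunc_eq hcompat
  exact ⟨L, fun k => (hL k).symm ▸ hS k⟩

lemma exists_isLeast_image_scaledTrunc (hW : W.Nonempty)
    (hbdd : ∀ k, BddBelow (scaledTrunc k '' W)) :
    ∃ L, ∀ k, IsLeast (scaledTrunc k '' W) (scaledTrunc k L) := by
  choose S hS using fun k => (hbdd k).exists_isLeast_of_nonempty (hW.image _)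
  have hcompat (k : ℕ) : S (k + 1) / 10 = S k := by
    have hmin := monotone_ediv_ten.map_isLeast (hS (k + 1))
    rw [image_ediv_ten_image_scaledTrunc_succ] at hmin
    exact hmin.unique (hS k)
  obtain ⟨L, hL⟩ := exists_scaledTrunc_eq hcompat
  exact ⟨L, fun k => (hL k).symm ▸ hS k⟩

lemma forall_le_iff_mem_upperBounds {M : DecimalRep} :
    (∀ w ∈ W, le w M) ↔ ∀ k, scaledTrunc k M ∈ upperBounds (scaledTrunc k '' W) := by
  simp only [le_iff_scaledTrunc_le, mem_upperBounds, Set.forall_mem_image]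
  exact ⟨fun h k w hw => h w hw k, fun h w hw k => h k hw⟩

lemma forall_le_iff_mem_lowerBounds {M : DecimalRep} :
    (∀ w ∈ W, le M w) ↔ ∀ k, scaledTrunc k M ∈ lowerBounds (scaledTrunc k '' W) := by
  simp only [le_iff_scaledTrunc_le, mem_lowerBounds, Set.forall_mem_image]
  exact ⟨fun h k w hw => h w hw k, fun h w hw k => h k hw⟩

lemma isLub_of_isGreatest_image_scaledTrunc {L : DecimalRep}
    (hL : ∀ k, IsGreatest (scaledTrunc k '' W) (scaledTrunc k L)) : IsLub W L :=
  ⟨forall_le_iff_mem_upperBounds.2 fun k => (hL k).2, fun _ hM =>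
    le_iff_scaledTrunc_le.2 fun k => forall_le_iff_mem_upperBounds.1 hM k (hL k).1⟩

lemma isGlb_of_isLeast_image_scaledTrunc {L : DecimalRep}
    (hL : ∀ k, IsLeast (scaledTrunc k '' W) (scaledTrunc k L)) : IsGlb W L :=
  ⟨forall_le_iff_mem_lowerBounds.2 fun k => (hL k).2, fun _ hM =>
    le_iff_scaledTrunc_le.2 fun k => forall_le_iff_mem_lowerBounds.1 hM k (hL k).1⟩

end DecimalRep

open DecimalRep in
/-- Every nonempty subset of `(𝓡,⪯)` bounded above has a least upper bound,
and every nonempty subset bounded below has a greatest lower bound. -/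
theorem lub_and_glb_property :
    (∀ W : Set DecimalRep, W.Nonempty → (∃ M, ∀ w ∈ W, le w M) →
      ∃ L, IsLub W L) ∧
    (∀ W : Set DecimalRep, W.Nonempty → (∃ M, ∀ w ∈ W, le M w) →
      ∃ L, IsGlb W L) := by
  constructor
  · rintro W hW ⟨M, hM⟩
    have hbdd (k : ℕ) : BddAbove (scaledTrunc k '' W) :=
      ⟨_, forall_le_iff_mem_upperBounds.1 hM k⟩
    obtain ⟨L, hL⟩ := exists_isGreatest_image_scaledTrunc hW hbdd
    exact ⟨L, isLub_of_isGreatest_image_scaledTrunc hL⟩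
  · rintro W hW ⟨M, hM⟩
    have hbdd (k : ℕ) : BddBelow (scaledTrunc k '' W) :=
      ⟨_, forall_le_iff_mem_lowerBounds.1 hM k⟩
    obtain ⟨L, hL⟩ := exists_isLeast_image_scaledTrunc hW hbdd
    exact ⟨L, isGlb_of_isLeast_image_scaledTrunc hL⟩
end

section
/- If x, y ∈ 𝓡 and there exists M ∈ ℕ such that |[x]_k − [y]_k| ≤ M/10^k for every k ∈ ℕ, then x ∼ y. -/
/-!
The truncations `[x]_k` increase with `k` while `[x]_k + 10⁻ᵏ` decreases, and both lie on the grid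
`10⁻ᵏ ℤ`. So once `[x]_k < [z]_k`, the two truncations stay at least one grid step apart at every
later index. If `x ≺ z ≺ y`, then `[x]_j` and `[y]_j` are at least two grid steps apart for some
`j`, and the later digits of `x` make up for less than one of them: `[y]_k - [x]_k ≥ 10⁻ʲ` for all
`k ≥ j`. So a gap between `x` and `y` keeps `[x]_k - [y]_k` away from `0`.
-/

open Filter Topology in
lemma tendsto_zero_of_abs_le_div_pow {𝕜 : Type*} [Field 𝕜] [LinearOrder 𝕜] [IsStrictOrderedRing 𝕜]
    [Archimedean 𝕜] [TopologicalSpace 𝕜] [OrderTopology 𝕜] {u : ℕ → 𝕜} {r C : 𝕜} (hr : 1 < r)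
    (h : ∀ k, |u k| ≤ C / r ^ k) : Tendsto u atTop (𝓝 0) := by
  have hbound : Tendsto (fun k : ℕ => C / r ^ k) atTop (𝓝 0) :=
    tendsto_const_nhds.div_atTop (tendsto_pow_atTop_atTop_of_one_lt hr)
  exact (tendsto_zero_iff_abs_tendsto_zero u).2 <|
    tendsto_of_tendsto_of_tendsto_of_le_of_le tendsto_const_nhds hbound (fun _ => abs_nonneg _) h

namespace DecimalRep

open Filter Topology

variable {x y z : DecimalRep}

lemma trunc_zero (x : DecimalRep) : trunc x 0 = x.1 := by
  simp [trunc]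

lemma trunc_succ (x : DecimalRep) (k : ℕ) :
    trunc x (k + 1) = trunc x k + ((x.2 k : ℕ) : ℚ) / 10 ^ (k + 1) := by
  simp only [trunc, Finset.sum_range_succ, add_assoc]

lemma trunc_injective : Function.Injective trunc := by
  intro x y h
  refine Prod.ext ?_ (funext fun k => Fin.ext ?_)
  · simpa [trunc_zero] using congrFun h 0
  · have hsucc := congrFun h (k + 1)
    rw [trunc_succ, trunc_succ, congrFun h k, add_right_inj,
      div_left_inj' (by positivity)] at hsucc
    exact_mod_cast hsucc

lemma monotone_trunc (x : DecimalRep) : Monotone (trunc x) := by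
  refine monotone_nat_of_le_succ fun k => ?_
  rw [trunc_succ]
  exact le_add_of_nonneg_right (by positivity)

lemma antitone_trunc_add_one_div (x : DecimalRep) :
    Antitone fun k => trunc x k + 1 / 10 ^ k := by
  refine antitone_nat_of_succ_le fun k => ?_
  have hdigit : ((x.2 k : ℕ) : ℚ) + 1 ≤ 10 := mod_cast (x.2 k).isLt
  calc trunc x (k + 1) + 1 / 10 ^ (k + 1)
      = trunc x k + (((x.2 k : ℕ) : ℚ) + 1) / 10 ^ (k + 1) := by rw [trunc_succ]; ring
    _ ≤ trunc x k + 10 / 10 ^ (k + 1) := by gcongr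
    _ = trunc x k + 1 / 10 ^ k := by rw [pow_succ]; field_simp

lemma exists_trunc_eq_intCast_div (x : DecimalRep) (k : ℕ) :
    ∃ n : ℤ, trunc x k = n / 10 ^ k := by
  induction k with
  | zero => exact ⟨x.1, by simp [trunc_zero]⟩
  | succ k ih =>
    obtain ⟨n, hn⟩ := ih
    refine ⟨10 * n + (x.2 k : ℕ), ?_⟩
    rw [trunc_succ, hn]
    push_cast
    field_simp
    ring

lemma trunc_add_one_div_le_of_trunc_lt {k : ℕ} (h : trunc x k < trunc y k) :
    trunc x k + 1 / 10 ^ k ≤ trunc y k := by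
  obtain ⟨m, hm⟩ := exists_trunc_eq_intCast_div x k
  obtain ⟨n, hn⟩ := exists_trunc_eq_intCast_div y k
  rw [hm, hn, div_lt_div_iff_of_pos_right (by positivity)] at h
  rw [hm, hn, ← add_div]
  gcongr
  exact_mod_cast h

lemma lt.exists_trunc_lt (h : lt x y) : ∃ k, trunc x k < trunc y k := by
  by_contra! hle
  exact h.2 (trunc_injective (funext fun k => (h.1 k).antisymm (hle k)))

lemma lt.eventually_trunc_add_one_div_le (h : lt x y) :
    ∀ᶠ k in atTop, trunc x k + 1 / 10 ^ k ≤ trunc y k := by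
  obtain ⟨j, hj⟩ := h.exists_trunc_lt
  filter_upwards [eventually_ge_atTop j] with k hk
  calc trunc x k + 1 / 10 ^ k
      ≤ trunc x j + 1 / 10 ^ j := antitone_trunc_add_one_div x hk
    _ ≤ trunc y j := trunc_add_one_div_le_of_trunc_lt hj
    _ ≤ trunc y k := monotone_trunc y hk

lemma exists_eventually_one_div_le_trunc_sub (hxz : lt x z) (hzy : lt z y) :
    ∃ j : ℕ, ∀ᶠ k in atTop, 1 / 10 ^ j ≤ trunc y k - trunc x k := by
  obtain ⟨j, hxz_j, hzy_j⟩ :=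
    (hxz.eventually_trunc_add_one_div_le.and hzy.eventually_trunc_add_one_div_le).exists
  refine ⟨j, ?_⟩
  filter_upwards [eventually_ge_atTop j] with k hk
  have hx : trunc x k + 1 / 10 ^ k ≤ trunc x j + 1 / 10 ^ j := antitone_trunc_add_one_div x hk
  have hy : trunc y j ≤ trunc y k := monotone_trunc y hk
  have hpos : (0 : ℚ) < 1 / 10 ^ k := by positivity
  linarith

lemma not_tendsto_trunc_sub_zero_of_lt_of_lt (hxz : lt x z) (hzy : lt z y) :
    ¬ Tendsto (fun k => trunc y k - trunc x k) atTop (𝓝 0) := by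
  intro hlim
  obtain ⟨j, hj⟩ := exists_eventually_one_div_le_trunc_sub hxz hzy
  have hpos : (0 : ℚ) < 1 / 10 ^ j := by positivity
  exact hpos.not_ge (ge_of_tendsto hlim hj)

end DecimalRep

open DecimalRep Filter Topology in
theorem equiv_of_trunc_close_general (x y : DecimalRep)
    (h : Tendsto (fun k => trunc x k - trunc y k) atTop (𝓝 0)) : equiv x y := by
  rintro ⟨z, hzx, hzy, ⟨le_xz, le_zy⟩ | ⟨le_yz, le_zx⟩⟩
  · exact not_tendsto_trunc_sub_zero_of_lt_of_lt ⟨le_xz, hzx.symm⟩ ⟨le_zy, hzy⟩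
      (by simpa using h.neg)
  · exact not_tendsto_trunc_sub_zero_of_lt_of_lt ⟨le_yz, hzy.symm⟩ ⟨le_zx, hzx⟩ h

open DecimalRep in
/-- If `|[x]_k − [y]_k| ≤ M/10^k` for every `k` and some `M ∈ ℕ`,
then `x ∼ y`. -/
theorem equiv_of_trunc_close (x y : DecimalRep)
    (h : ∃ M : ℕ, ∀ k : ℕ, |trunc x k - trunc y k| ≤ (M : ℚ) / 10 ^ k) :
    equiv x y := by
  obtain ⟨M, hM⟩ := h
  exact equiv_of_trunc_close_general x y (tendsto_zero_of_abs_le_div_pow (by norm_num) hM)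
end
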